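/- Let Ω ⊂ ℂ² be a convex domain containing no complex affine line. If the boundary ∂Ω contains a non-trivial affine disk (the image of the open unit disk 𝔻 under a non-constant complex affine map ℂ → ℂ²), then there exists an affine limit Ω_∞ of Ω (in particular Ω_∞ is a convex domain in ℂ² containing no complex affine line) such that Ω_∞ is biholomorphic to 𝔻 × 𝔻. -/

import Mathlib

open Set Metric Filter Topology
open scoped ENNReal NNReal

noncomputable section

section Defs

variable {E F : Type*} [NormedAddCommGroup E] [NormedSpace ℂ E]
  [NormedAddCommGroup F] [NormedSpace ℂ F]

/-- A convex domain: a non-empty open convex subset. -/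
def IsConvexDomain (Ω : Set E) : Prop := IsOpen Ω ∧ Convex ℝ Ω ∧ Ω.Nonempty

/-- `Ω` contains no complex affine line `a + ℂ·b`, `b ≠ 0`. -/
def NoComplexLine (Ω : Set E) : Prop :=
  ∀ a b : E, b ≠ 0 → ¬ (∀ lam : ℂ, a + lam • b ∈ Ω)

/-- Membership in `𝕏_d`: a convex domain containing no complex affine line. -/
def InX (Ω : Set E) : Prop := IsConvexDomain Ω ∧ NoComplexLine Ω

/-- Convergence of a sequence of sets in the local Hausdorff topology. -/
def LocHausConv (Ωn : ℕ → Set E) (Ω : Set E) : Prop :=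
  ∃ R₀ : ℝ, 0 < R₀ ∧ ∀ R : ℝ, R₀ ≤ R →
    Tendsto (fun n => Metric.hausdorffDist (Ωn n ∩ Metric.ball 0 R) (Ω ∩ Metric.ball 0 R))
      atTop (nhds 0)

/-- The sequence `z` is compactly divergent in `Ω`. -/
def CompactlyDivergent (Ω : Set E) (z : ℕ → E) : Prop :=
  ∀ K : Set E, IsCompact K → K ⊆ Ω → ∃ N : ℕ, ∀ n ≥ N, z n ∉ K

/-- `Ω'` is an affine limit of `Ω`. -/
def IsAffineLimit (Ω Ω' : Set E) : Prop :=
  InX Ω' ∧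
  ∃ (z : ℕ → E) (zlim : E) (A : ℕ → (E ≃ᵃ[ℂ] E)),
    (∀ n, z n ∈ Ω) ∧ CompactlyDivergent Ω z ∧ zlim ∈ Ω' ∧
    LocHausConv (fun n => (A n) '' Ω) Ω' ∧
    Tendsto (fun n => A n (z n)) atTop (nhds zlim)

/-- `S ⊆ E` and `T ⊆ F` are biholomorphic. -/
def Biholomorphic (S : Set E) (T : Set F) : Prop :=
  ∃ (f : E → F) (g : F → E),
    DifferentiableOn ℂ f S ∧ DifferentiableOn ℂ g T ∧
    MapsTo f S T ∧ MapsTo g T S ∧ InvOn g f S T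

/-- The bidisk `𝔻 × 𝔻 ⊆ ℂ × ℂ`. -/
def unitBidisk : Set (ℂ × ℂ) := (Metric.ball (0:ℂ) 1) ×ˢ (Metric.ball (0:ℂ) 1)

/-- The infinitesimal Kobayashi metric of `Ω ⊆ E`. -/
def kob (Ω : Set E) (z v : E) : ℝ :=
  sInf { c : ℝ | ∃ (ξ : ℂ) (f : ℂ → E),
    DifferentiableOn ℂ f (Metric.ball 0 1) ∧ MapsTo f (Metric.ball 0 1) Ω ∧
    f 0 = z ∧ ξ • deriv f 0 = v ∧ c = ‖ξ‖ }

/-- `δ_Ω(z; v)`: the distance from `z` to `(z + ℂ·v) ∩ ∂Ω`, valued in `ℝ≥0∞`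
(`⊤` when the intersection is empty). -/
def distInDir (Ω : Set E) (z v : E) : ℝ≥0∞ :=
  EMetric.infEdist z ({x | ∃ lam : ℂ, x = z + lam • v} ∩ frontier Ω)

end Defs

/-! Choose affine coordinates `(x, y)` in which the disk lies on the line `y = 0` and the domain
`U` lies in `0 < re y`. As `t → 0⁺`, the dilates `{(x, y) | (x, t y) ∈ U}` converge to the product
of the interior of the face `{x | (x, 0) ∈ closure U}` and of the cone generated by the projection
of `U` to `y`. Both are proper convex domains of the plane: a face equal to the whole plane would
produce a complex line in `U`. The boundary point of such a planar domain nearest to an interior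
point has a tangent disk inside the domain, so zooming in there gives a half-plane. A diagonal
sequence of the iterated limit is an affine limit of `U`, affinely equivalent to a product of
half-planes, and hence biholomorphic to the bidisk by the Cayley transform. -/

section LocalConvergence

variable {ι κ X Y : Type*} [TopologicalSpace X] [TopologicalSpace Y]

/-- The sets `S i` converge to `D` along `l` if, locally uniformly away from the frontier of `D`,
they eventually have the same points as `D`. Using an arbitrary filter `l` makes iterated limits
available through `Filter.curry`. -/
def ConvergesLocally (S : ι → Set X) (l : Filter ι) (D : Set X) : Prop :=
  ∀ p ∉ frontier D, ∀ᶠ q in l ×ˢ 𝓝 p, (q.2 ∈ S q.1 ↔ q.2 ∈ D)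

namespace ConvergesLocally

variable {S : ι → Set X} {l : Filter ι} {D : Set X}

theorem of_isOpen (hD : IsOpen D) (hmem : ∀ p ∈ D, ∀ᶠ q in l ×ˢ 𝓝 p, q.2 ∈ S q.1)
    (hnotMem : ∀ p ∉ closure D, ∀ᶠ q in l ×ˢ 𝓝 p, q.2 ∉ S q.1) : ConvergesLocally S l D := by
  intro p hp
  rw [hD.frontier_eq, Set.mem_sdiff, not_and_not_right] at hp
  by_cases hpD : p ∈ closure D
  · filter_upwards [hmem p (hp hpD), tendsto_snd.eventually (hD.mem_nhds (hp hpD))]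
      with q hqS hqD using iff_of_true hqS hqD
  · filter_upwards [hnotMem p hpD,
      tendsto_snd.eventually (isClosed_closure.isOpen_compl.mem_nhds hpD)]
      with q hqS hqD using iff_of_false hqS fun h ↦ hqD (subset_closure h)

theorem eventually_mem (h : ConvergesLocally S l D) (hD : IsOpen D) {p : X} (hp : p ∈ D) :
    ∀ᶠ q in l ×ˢ 𝓝 p, q.2 ∈ S q.1 := by
  filter_upwards [h p (disjoint_right.1 (disjoint_frontier_iff_isOpen.2 hD) hp),
    tendsto_snd.eventually (hD.mem_nhds hp)] with q hq hqD using hq.2 hqD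

theorem eventually_notMem (h : ConvergesLocally S l D) {p : X} (hp : p ∉ closure D) :
    ∀ᶠ q in l ×ˢ 𝓝 p, q.2 ∉ S q.1 := by
  filter_upwards [h p fun hpD ↦ hp (frontier_subset_closure hpD),
    tendsto_snd.eventually (isClosed_closure.isOpen_compl.mem_nhds hp)]
    with q hq hqD using fun hqS ↦ hqD (subset_closure (hq.1 hqS))

theorem eventually_forall_mem_iff (h : ConvergesLocally S l D) {K : Set X} (hK : IsCompact K)
    (hKD : Disjoint K (frontier D)) : ∀ᶠ i in l, ∀ x ∈ K, (x ∈ S i ↔ x ∈ D) := by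
  have hlK := hK.mem_prod_nhdsSet_of_forall fun p hp ↦ h p (disjoint_left.1 hKD hp)
  obtain ⟨P, hP, V, hV, hPV⟩ := mem_prod_iff.1 hlK
  filter_upwards [hP] with i hi x hx using hPV (mk_mem_prod hi (subset_of_mem_nhdsSet hV hx))

theorem comp_tendsto (h : ConvergesLocally S l D) {m : Filter κ} {φ : κ → ι}
    (hφ : Tendsto φ m l) : ConvergesLocally (S ∘ φ) m D :=
  fun p hp ↦ (hφ.prodMap tendsto_id).eventually (h p hp)

theorem preimage (h : ConvergesLocally S l D) (φ : Y ≃ₜ X) :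
    ConvergesLocally (fun i ↦ φ ⁻¹' S i) l (φ ⁻¹' D) := by
  intro p hp
  rw [← φ.preimage_frontier] at hp
  exact (tendsto_id.prodMap φ.continuous.continuousAt).eventually (h (φ p) hp)

theorem exists_mem_isOpen (h : ConvergesLocally S l D) {p : X} (hp : p ∉ frontier D) :
    ∃ P ∈ l, ∃ V, IsOpen V ∧ p ∈ V ∧ ∀ i ∈ P, ∀ x ∈ V, (x ∈ S i ↔ x ∈ D) := by
  obtain ⟨P, hP, V, hV, hPV⟩ := mem_prod_iff.1 (h p hp)
  obtain ⟨W, hWV, hW, hpW⟩ := mem_nhds_iff.1 hV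
  exact ⟨P, hP, W, hW, hpW, fun i hi x hx ↦ hPV (mk_mem_prod hi (hWV hx))⟩

theorem curry [LocallyCompactSpace X] {S : ι → κ → Set X} {S' : ι → Set X} {m : Filter κ}
    (hS : ∀ᶠ i in l, ConvergesLocally (S i) m (S' i)) (hS' : ConvergesLocally S' l D) :
    ConvergesLocally (fun k : ι × κ ↦ S k.1 k.2) (l.curry m) D := by
  intro p hp
  obtain ⟨P, hP, V, hV, hpV, hPV⟩ := hS'.exists_mem_isOpen hp
  obtain ⟨K, hK, hpK, hKV⟩ :=
    exists_compact_subset (hV.inter isClosed_frontier.isOpen_compl) ⟨hpV, hp⟩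
  have hKS : ∀ i ∈ P, Disjoint K (frontier (S' i)) := by
    intro i hi
    have hSD : S' i ∩ V = D ∩ V := by grind
    have hfrontier : frontier (S' i) ∩ V = frontier D ∩ V := by
      rw [← frontier_inter_open_inter hV, hSD, frontier_inter_open_inter hV]
    exact disjoint_left.2 fun x hxK hxS ↦
      (hKV hxK).2 (hfrontier.subset ⟨hxS, (hKV hxK).1⟩).1
  have hagree : ∀ᶠ k in l.curry m, ∀ x ∈ K, (x ∈ S k.1 k.2 ↔ x ∈ D) := by
    rw [eventually_curry_iff]
    filter_upwards [hP, hS] with i hi hSi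
    filter_upwards [hSi.eventually_forall_mem_iff hK (hKS i hi)] with j hj x hx
    exact (hj x hx).trans (hPV i hi x (hKV hx).1)
  filter_upwards [prod_mem_prod hagree (mem_interior_iff_mem_nhds.1 hpK)] with q hq
  exact hq.1 q.2 hq.2

theorem prod {T : ι → Set Y} {D' : Set Y} (hS : ConvergesLocally S l D)
    (hT : ConvergesLocally T l D') (hD : IsOpen D) (hD' : IsOpen D') :
    ConvergesLocally (fun i ↦ S i ×ˢ T i) l (D ×ˢ D') := by
  have hfst (p : X × Y) : Tendsto (Prod.map id Prod.fst) (l ×ˢ 𝓝 p) (l ×ˢ 𝓝 p.1) :=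
    tendsto_id.prodMap continuousAt_fst
  have hsnd (p : X × Y) : Tendsto (Prod.map id Prod.snd) (l ×ˢ 𝓝 p) (l ×ˢ 𝓝 p.2) :=
    tendsto_id.prodMap continuousAt_snd
  refine of_isOpen (hD.prod hD') (fun p hp ↦ ?_) fun p hp ↦ ?_
  · filter_upwards [(hfst p).eventually (hS.eventually_mem hD hp.1),
      (hsnd p).eventually (hT.eventually_mem hD' hp.2)] with q hqS hqT using ⟨hqS, hqT⟩
  · rw [closure_prod_eq, mem_prod, not_and_or] at hp
    rcases hp with hp | hp
    · filter_upwards [(hfst p).eventually (hS.eventually_notMem hp)] with q hq h using hq h.1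
    · filter_upwards [(hsnd p).eventually (hT.eventually_notMem hp)] with q hq h using hq h.2

theorem exists_isCountablyGenerated [SecondCountableTopology X] (h : ConvergesLocally S l D) :
    ∃ l', l ≤ l' ∧ l'.IsCountablyGenerated ∧ ConvergesLocally S l' D := by
  choose! P hP V hV hpV hPV using fun p (hp : p ∈ (frontier D)ᶜ) ↦ h.exists_mem_isOpen hp
  obtain ⟨c, hc, hc_countable, hc_cover⟩ := TopologicalSpace.isOpen_biUnion_countable _ V hV
  refine ⟨⨅ s ∈ P '' c, 𝓟 s, ?_, isCountablyGenerated_biInf_principal (hc_countable.image P),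
    fun p hp ↦ ?_⟩
  · simpa only [le_iInf_iff, le_principal_iff, forall_mem_image] using fun p hp ↦ hP p (hc hp)
  · obtain ⟨p', hp', hpp'⟩ := mem_iUnion₂.1 (hc_cover.symm.subset (mem_biUnion hp (hpV p hp)))
    have hP' : P p' ∈ ⨅ s ∈ P '' c, 𝓟 s :=
      mem_iInf_of_mem (P p') (mem_iInf_of_mem (mem_image_of_mem P hp') (mem_principal_self _))
    filter_upwards [prod_mem_prod hP' ((hV p' (hc hp')).mem_nhds hpp')] with q hq
    exact hPV p' (hc hp') q.1 hq.1 q.2 hq.2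

theorem exists_seq [SecondCountableTopology X] [FirstCountableTopology Y] [NeBot l]
    (h : ConvergesLocally S l D) {f : ι → Y} {y : Y} (hf : Tendsto f l (𝓝 y)) {P : ι → Prop}
    (hP : ∀ᶠ i in l, P i) :
    ∃ φ : ℕ → ι, (∀ n, P (φ n)) ∧ ConvergesLocally (S ∘ φ) atTop D ∧
      Tendsto (f ∘ φ) atTop (𝓝 y) := by
  obtain ⟨l', hl', _, hS⟩ := h.exists_isCountablyGenerated
  have hfreq : ∃ᶠ i in l' ⊓ comap f (𝓝 y), P i :=
    hP.frequently.filter_mono (le_inf hl' hf.le_comap)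
  obtain ⟨φ, hφ, hPφ⟩ := exists_seq_forall_of_frequently hfreq
  rw [tendsto_inf, tendsto_comap_iff] at hφ
  exact ⟨φ, hPφ, hS.comp_tendsto hφ.1, hφ.2⟩

end ConvergesLocally

end LocalConvergence

section LocalHausdorff

theorem closure_inter_of_convex {E : Type*} [AddCommGroup E] [Module ℝ E] [TopologicalSpace E]
    [IsTopologicalAddGroup E] [ContinuousSMul ℝ E] {A B : Set E} (hA : Convex ℝ A)
    (hB : Convex ℝ B) (hAB : (interior A ∩ interior B).Nonempty) :
    closure (A ∩ B) = closure A ∩ closure B := by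
  obtain ⟨p, hpA, hpB⟩ := hAB
  refine closure_inter_subset.antisymm fun x hx ↦ ?_
  have hsegment : openSegment ℝ x p ⊆ A ∩ B := subset_inter
    ((hA.openSegment_closure_interior_subset_interior hx.1 hpA).trans interior_subset)
    ((hB.openSegment_closure_interior_subset_interior hx.2 hpB).trans interior_subset)
  exact closure_mono hsegment (segment_subset_closure_openSegment (left_mem_segment ℝ x p))

variable {E : Type*} [NormedAddCommGroup E] [ProperSpace E]
  {ι : Type*} {S : ι → Set E} {l : Filter ι} {D : Set E}

theorem ConvergesLocally.eventually_inter_ball_subset_thickening (h : ConvergesLocally S l D)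
    (hD : IsOpen D) (R : ℝ) {ε : ℝ} (hε : 0 < ε) :
    ∀ᶠ i in l, D ∩ ball 0 R ⊆ thickening ε (S i ∩ ball 0 R) := by
  have hbounded : TotallyBounded (D ∩ ball 0 R) :=
    ((isCompact_closedBall 0 R).totallyBounded).subset
      (inter_subset_right.trans ball_subset_closedBall)
  obtain ⟨t, ht, ht_finite, ht_net⟩ := finite_approx_of_totallyBounded hbounded ε hε
  have htD : Disjoint t (frontier D) :=
    (disjoint_frontier_iff_isOpen.2 hD).symm.mono_left (ht.trans inter_subset_left)
  filter_upwards [h.eventually_forall_mem_iff ht_finite.isCompact htD] with i hi x hx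
  obtain ⟨y, hy, hxy⟩ := mem_iUnion₂.1 (ht_net hx)
  exact mem_thickening_iff.2 ⟨y, ⟨(hi y hy).2 (ht hy).1, (ht hy).2⟩, hxy⟩

variable [NormedSpace ℝ E]

theorem ConvergesLocally.eventually_subset_thickening (h : ConvergesLocally S l D)
    (hD : IsOpen D) (hD_convex : Convex ℝ D) {R : ℝ} (hR : (D ∩ ball 0 R).Nonempty) {ε : ℝ}
    (hε : 0 < ε) : ∀ᶠ i in l, S i ∩ ball 0 R ⊆ thickening ε (D ∩ ball 0 R) := by
  have hclosure : closure D ∩ closedBall 0 R ⊆ thickening ε (D ∩ ball 0 R) := by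
    have hR0 : R ≠ 0 := by
      rintro rfl
      simp at hR
    rw [← closure_ball 0 hR0, ← closure_inter_of_convex hD_convex (convex_ball 0 R)
      (by rwa [hD.interior_eq, isOpen_ball.interior_eq])]
    exact closure_subset_thickening hε _
  have hK : IsCompact (closedBall 0 R \ thickening ε (D ∩ ball 0 R)) :=
    (isCompact_closedBall 0 R).diff isOpen_thickening
  have hKD : Disjoint (closedBall 0 R \ thickening ε (D ∩ ball 0 R)) (closure D) :=
    disjoint_left.2 fun x hx hxD ↦ hx.2 (hclosure ⟨hxD, hx.1⟩)
  filter_upwards [h.eventually_forall_mem_iff hK (hKD.mono_right frontier_subset_closure)]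
    with i hi x hx
  by_contra hxε
  have hxK := Set.mem_sdiff_of_mem (ball_subset_closedBall hx.2) hxε
  exact disjoint_left.1 hKD hxK (subset_closure ((hi x hxK).1 hx.1))

theorem ConvergesLocally.locHausConv {S : ℕ → Set E} (h : ConvergesLocally S atTop D)
    (hD : IsOpen D) (hD_convex : Convex ℝ D) (hD_nonempty : D.Nonempty) : LocHausConv S D := by
  obtain ⟨p, hp⟩ := hD_nonempty
  refine ⟨‖p‖ + 1, by positivity, fun R hR ↦ ?_⟩
  have hDR : (D ∩ ball 0 R).Nonempty := ⟨p, hp, by rw [mem_ball_zero_iff]; linarith⟩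
  refine tendsto_order.2 ⟨fun ε hε ↦ .of_forall fun n ↦ hε.trans_le hausdorffDist_nonneg,
    fun ε hε ↦ ?_⟩
  filter_upwards [h.eventually_subset_thickening hD hD_convex hDR (half_pos hε),
    h.eventually_inter_ball_subset_thickening hD R (half_pos hε)] with n hSD hDS
  refine (hausdorffDist_le_of_mem_dist (half_pos hε).le (fun x hx ↦ ?_) fun x hx ↦ ?_).trans_lt
    (half_lt_self hε)
  · obtain ⟨y, hy, hxy⟩ := mem_thickening_iff.1 (hSD hx)
    exact ⟨y, hy, hxy.le⟩
  · obtain ⟨y, hy, hxy⟩ := mem_thickening_iff.1 (hDS hx)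
    exact ⟨y, hy, hxy.le⟩

end LocalHausdorff

section AffineLimits

variable {E F : Type*} [NormedAddCommGroup E] [NormedSpace ℂ E] [NormedAddCommGroup F]
  [NormedSpace ℂ F]

namespace InX

theorem preimage {Ω : Set E} (hΩ : InX Ω) (Ψ : F ≃ᴬ[ℂ] E) : InX (Ψ ⁻¹' Ω) := by
  obtain ⟨⟨hΩ_open, hΩ_convex, hΩ_nonempty⟩, hΩ_line⟩ := hΩ
  let Ψ_real : F →ᵃ[ℝ] E :=
    { toFun := Ψ
      linear := Ψ.linear.toLinearMap.restrictScalars ℝ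
      map_vadd' := Ψ.toAffineEquiv.toAffineMap.map_vadd }
  refine ⟨⟨hΩ_open.preimage Ψ.continuous, hΩ_convex.affine_preimage Ψ_real,
    hΩ_nonempty.preimage Ψ.surjective⟩, fun a b hb hline ↦ ?_⟩
  refine hΩ_line (Ψ a) (Ψ.linear b) (Ψ.linear.map_ne_zero_iff.2 hb) fun c ↦ ?_
  have hΨ : Ψ (c • b +ᵥ a) = Ψ.linear (c • b) +ᵥ Ψ a :=
    Ψ.toAffineEquiv.toAffineMap.map_vadd a (c • b)
  rw [vadd_eq_add, vadd_eq_add, map_smul, add_comm, add_comm _ (Ψ a)] at hΨ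
  exact hΨ ▸ hline c

/-- Averaging a complex line in `closure Ω` with a point of `Ω` moves it into `Ω`. -/
theorem noComplexLine_closure {Ω : Set E} (hΩ : InX Ω) : NoComplexLine (closure Ω) := by
  obtain ⟨⟨hΩ_open, hΩ_convex, x, hx⟩, hΩ_line⟩ := hΩ
  intro a b hb hline
  refine hΩ_line ((1 / 2 : ℝ) • a + (1 / 2 : ℝ) • x) b hb fun c ↦ ?_
  have hmem := hΩ_convex.combo_closure_interior_mem_interior (hline (2 * c))
    (hΩ_open.interior_eq.symm ▸ hx) (a := 1 / 2) (b := 1 / 2) (by norm_num) (by norm_num)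
    (by norm_num)
  rw [hΩ_open.interior_eq] at hmem
  convert hmem using 1
  module

end InX

theorem NoComplexLine.of_ne_univ {D : Set ℂ} (hD : D ≠ univ) : NoComplexLine D := by
  obtain ⟨w, hw⟩ := (ne_univ_iff_exists_notMem D).1 hD
  refine fun a b hb hline ↦ hw ?_
  simpa [hb] using hline ((w - a) / b)

theorem NoComplexLine.prod {A : Set E} {B : Set F} (hA : NoComplexLine A)
    (hB : NoComplexLine B) : NoComplexLine (A ×ˢ B) := by
  rintro ⟨a₁, a₂⟩ ⟨b₁, b₂⟩ hb hline
  by_cases hb₁ : b₁ = 0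
  · exact hB a₂ b₂ (by rintro rfl; exact hb (by simp [hb₁])) fun c ↦ (hline c).2
  · exact hA a₁ b₁ hb₁ fun c ↦ (hline c).1

theorem InX.prod {A : Set E} {B : Set F} (hA : InX A) (hB : InX B) : InX (A ×ˢ B) :=
  ⟨⟨hA.1.1.prod hB.1.1, hA.1.2.1.prod hB.1.2.1, hA.1.2.2.prod hB.1.2.2⟩, hA.2.prod hB.2⟩

theorem isAffineLimit_of_convergesLocally [ProperSpace E] {Ω Ω' : Set E}
    {T : ℕ → E ≃ᴬ[ℂ] E} (h : ConvergesLocally (fun n ↦ T n ⁻¹' Ω) atTop Ω') (hΩ' : InX Ω')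
    {o x : E} (ho : o ∈ Ω') (hTo : ∀ n, T n o ∈ Ω)
    (hTx : Tendsto (fun n ↦ T n o) atTop (𝓝 x)) (hx : x ∉ Ω) : IsAffineLimit Ω Ω' := by
  refine ⟨hΩ', fun n ↦ T n o, o, fun n ↦ (T n).symm.toAffineEquiv, hTo,
    fun K hK hKΩ ↦ ?_, ho, ?_, ?_⟩
  · have hxK : Kᶜ ∈ 𝓝 x := hK.isClosed.isOpen_compl.mem_nhds fun hxK ↦ hx (hKΩ hxK)
    exact eventually_atTop.1 (hTx.eventually hxK)
  · simpa only [ContinuousAffineEquiv.coe_coe, ContinuousAffineEquiv.image_eq_preimage_symm,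
      ContinuousAffineEquiv.symm_symm] using h.locHausConv hΩ'.1.1 hΩ'.1.2.1 hΩ'.1.2.2
  · simp

end AffineLimits

section BlowUpAlongFace

open scoped Pointwise

theorem nhdsGT_prod_nhds_le {α X : Type*} [TopologicalSpace α] [Preorder α] [TopologicalSpace X]
    (a : α) (p : X) : 𝓝[>] a ×ˢ 𝓝 p ≤ 𝓝 (a, p) := by
  rw [nhds_prod_eq]
  exact Filter.prod_mono_left _ nhdsWithin_le_nhds

variable {E F : Type*} [NormedAddCommGroup E] [NormedAddCommGroup F] {U : Set (E × F)}

/-- The relative interior of the face that `closure U` has in the first coordinate plane, as a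
subset of that plane. It is the first factor of the limit of `U` under dilations of the second
coordinate. -/
def horizontalFace (U : Set (E × F)) : Set E := interior {x | (x, 0) ∈ closure U}

theorem isOpen_horizontalFace : IsOpen (horizontalFace U) := isOpen_interior

variable [NormedSpace ℝ E] [NormedSpace ℝ F]

/-- The cone generated by the projection of `U` to the second coordinate. It is the second factor
of the limit of `U` under dilations of the second coordinate. -/
def verticalCone (U : Set (E × F)) : Set F := ConvexCone.hull ℝ (Prod.snd '' U)

theorem convex_setOf_mk_zero_mem_closure (hU : Convex ℝ U) :
    Convex ℝ {x : E | (x, (0 : F)) ∈ closure U} :=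
  hU.closure.linear_preimage (LinearMap.inl ℝ E F)

theorem convex_horizontalFace (hU : Convex ℝ U) : Convex ℝ (horizontalFace U) :=
  (convex_setOf_mk_zero_mem_closure hU).interior

theorem mem_verticalCone_iff (hU : Convex ℝ U) {y : F} :
    y ∈ verticalCone U ↔ ∃ r : ℝ, 0 < r ∧ y ∈ r • Prod.snd '' U :=
  ConvexCone.mem_hull_of_convex (hU.linear_image (.snd ℝ E F))

theorem isOpen_verticalCone (hU : IsOpen U) (hU_convex : Convex ℝ U) :
    IsOpen (verticalCone U) := by
  have hcone : verticalCone U = ⋃ r ∈ Ioi (0 : ℝ), r • Prod.snd '' U := by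
    ext y
    simp only [mem_verticalCone_iff hU_convex, mem_iUnion₂, mem_Ioi, exists_prop]
  rw [hcone]
  exact isOpen_biUnion fun r hr ↦ (isOpenMap_snd U hU).smul₀ (ne_of_gt hr)

theorem closure_horizontalFace (hU : Convex ℝ U) (hface : (horizontalFace U).Nonempty) :
    closure (horizontalFace U) = {x | (x, 0) ∈ closure U} := by
  have hclosed : IsClosed {x : E | (x, (0 : F)) ∈ closure U} :=
    isClosed_closure.preimage (by fun_prop)
  rw [horizontalFace, (convex_setOf_mk_zero_mem_closure
    hU).closure_interior_eq_closure_of_nonempty_interior hface, hclosed.closure_eq]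

/-- For `y = r y₁` with `(x₁, y₁) ∈ U`, the point `(x, t y)` is a convex combination of `(x₁, y₁)`,
with weight `t r`, and of a point of the face which tends to `x` as `t → 0`. -/
theorem eventually_mk_smul_mem (hU : IsOpen U) (hU_convex : Convex ℝ U) {p : E × F}
    (hp : p ∈ horizontalFace U ×ˢ verticalCone U) :
    ∀ᶠ q in 𝓝[>] (0 : ℝ) ×ˢ 𝓝 p, (q.2.1, q.1 • q.2.2) ∈ U := by
  obtain ⟨hp_face, hp_cone⟩ := hp
  obtain ⟨r, hr, _, ⟨⟨x₁, y₁⟩, hU₁, rfl⟩, hy₁⟩ := (mem_verticalCone_iff hU_convex).1 hp_cone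
  have hcone : ∀ᶠ q in 𝓝 ((0 : ℝ), p), (x₁, r⁻¹ • q.2.2) ∈ U :=
    ContinuousAt.eventually_mem (f := fun q : ℝ × E × F ↦ (x₁, r⁻¹ • q.2.2)) (by fun_prop)
      (hU.mem_nhds (by simpa [← hy₁, smul_smul, inv_mul_cancel₀ hr.ne'] using hU₁))
  have hface : ∀ᶠ q in 𝓝 ((0 : ℝ), p),
      (1 - q.1 * r)⁻¹ • (q.2.1 - (q.1 * r) • x₁) ∈ horizontalFace U := by
    refine ContinuousAt.eventually_mem
      (f := fun q : ℝ × E × F ↦ (1 - q.1 * r)⁻¹ • (q.2.1 - (q.1 * r) • x₁)) ?_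
      (isOpen_horizontalFace.mem_nhds (by simpa using hp_face))
    have : (1 : ℝ) - 0 * r ≠ 0 := by simp
    fun_prop (disch := assumption)
  have ht_small : ∀ᶠ q in 𝓝[>] (0 : ℝ) ×ˢ 𝓝 p, q.1 ∈ Ioo 0 r⁻¹ :=
    tendsto_fst.eventually (Ioo_mem_nhdsGT (inv_pos.2 hr))
  have hle := nhdsGT_prod_nhds_le (0 : ℝ) p
  filter_upwards [hle hcone, hle hface, ht_small] with ⟨t, x, y⟩ hty htx ⟨ht, htr⟩
  have htr1 : t * r < 1 := (lt_mul_inv_iff₀ hr).1 (by rwa [one_mul])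
  have htx' : ((1 - t * r)⁻¹ • (x - (t * r) • x₁), (0 : F)) ∈ closure U :=
    interior_subset (s := {x | (x, 0) ∈ closure U}) htx
  have hmem := hU_convex.combo_interior_closure_mem_interior (hU.interior_eq.symm ▸ hty)
    htx' (mul_pos ht hr) (sub_nonneg.2 htr1.le) (add_sub_cancel (t * r) 1)
  rw [hU.interior_eq] at hmem
  convert hmem using 2
  · simp [smul_smul, mul_inv_cancel₀ (sub_pos.2 htr1).ne']
  · simp [smul_smul, hr.ne']

theorem convergesLocally_dilation_snd (hU : IsOpen U) (hU_convex : Convex ℝ U)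
    (hface : (horizontalFace U).Nonempty) :
    ConvergesLocally (fun t : ℝ ↦ {z : E × F | (z.1, t • z.2) ∈ U}) (𝓝[>] 0)
      (horizontalFace U ×ˢ verticalCone U) := by
  refine .of_isOpen (isOpen_interior.prod (isOpen_verticalCone hU hU_convex))
    (fun p hp ↦ eventually_mk_smul_mem hU hU_convex hp) fun p hp ↦ ?_
  rw [closure_prod_eq, mem_prod, not_and_or, closure_horizontalFace hU_convex hface] at hp
  rcases hp with hp | hp
  · have hclosure : ∀ᶠ q in 𝓝 ((0 : ℝ), p), (q.2.1, q.1 • q.2.2) ∈ (closure U)ᶜ :=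
      ContinuousAt.eventually_mem (f := fun q : ℝ × E × F ↦ (q.2.1, q.1 • q.2.2)) (by fun_prop)
        (isClosed_closure.isOpen_compl.mem_nhds (by simpa using hp))
    filter_upwards [nhdsGT_prod_nhds_le (0 : ℝ) p hclosure] with q hq hqU
    exact hq (subset_closure hqU)
  · have hcone : ∀ᶠ q in 𝓝[>] (0 : ℝ) ×ˢ 𝓝 p,
        q.1 ∈ Ioi 0 ∧ q.2.2 ∈ (closure (verticalCone U))ᶜ :=
      (tendsto_fst.eventually self_mem_nhdsWithin).and
        ((continuous_snd.tendsto p |>.comp tendsto_snd).eventually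
          (isClosed_closure.isOpen_compl.mem_nhds hp))
    filter_upwards [hcone] with q ⟨hq_pos, hq⟩ hqU
    have hqU' : q.1 • q.2.2 ∈ ConvexCone.hull ℝ (Prod.snd '' U) :=
      ConvexCone.subset_hull (mem_image_of_mem Prod.snd hqU)
    exact hq (subset_closure ((ConvexCone.smul_mem_iff _ hq_pos).1 hqU'))

end BlowUpAlongFace

section BlowUpAtTangentDisk

variable {V : Type*} [NormedAddCommGroup V] [InnerProductSpace ℝ V]

theorem exists_norm_add_smul_lt {a w : V} (h : inner ℝ a w < 0) :
    ∃ r : ℝ, 0 < r ∧ ‖a + r • w‖ < ‖a‖ := by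
  have hw : 0 < ‖w‖ := norm_pos_iff.2 fun hw ↦ by simp [hw] at h
  refine ⟨-inner ℝ a w / ‖w‖ ^ 2, div_pos (neg_pos.2 h) (pow_pos hw 2),
    lt_of_pow_lt_pow_left₀ 2 (norm_nonneg a) ?_⟩
  calc ‖a + (-inner ℝ a w / ‖w‖ ^ 2) • w‖ ^ 2 = ‖a‖ ^ 2 - inner ℝ a w ^ 2 / ‖w‖ ^ 2 := by
        rw [norm_add_sq_real, real_inner_smul_right, norm_smul, mul_pow, norm_div, norm_pow,
          norm_neg, norm_norm, Real.norm_eq_abs, div_pow, sq_abs]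
        field
    _ < ‖a‖ ^ 2 := sub_lt_self _ (div_pos (sq_pos_of_ne_zero h.ne) (pow_pos hw 2))

/-- Otherwise `q` would lie between `z` and a point of the ball. -/
theorem inner_sub_nonneg_of_ball_subset {D : Set V} (hD : Convex ℝ D) {p q z : V} (hq : q ∉ D)
    (hball : ball p (dist p q) ⊆ D) (hz : z ∈ D) : 0 ≤ inner ℝ (p - q) (z - q) := by
  by_contra! hneg
  obtain ⟨r, hr, hrz⟩ := exists_norm_add_smul_lt hneg
  have hopposite : q - r • (z - q) ∈ D := by
    refine hball ?_
    rwa [mem_ball', dist_eq_norm, dist_eq_norm, ← sub_add]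
  have hq_mem := convex_iff_div.1 hD hz hopposite hr.le zero_le_one (by positivity)
  refine hq ?_
  convert hq_mem using 1
  match_scalars <;> field

theorem inner_sub_pos_of_ball_subset {D : Set V} (hD : IsOpen D) (hD_convex : Convex ℝ D)
    {p q z : V} (hq : q ∉ D) (hball : ball p (dist p q) ⊆ D) (hpq : p ≠ q) (hz : z ∈ D) :
    0 < inner ℝ (p - q) (z - q) := by
  obtain ⟨t, hzt, ht⟩ : ∃ t : ℝ, z - t • (p - q) ∈ D ∧ 0 < t := by
    have hcont : ContinuousAt (fun t : ℝ ↦ z - t • (p - q)) 0 := by fun_prop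
    have hnear : ∀ᶠ t in 𝓝[>] (0 : ℝ), z - t • (p - q) ∈ D :=
      nhdsWithin_le_nhds (hcont.eventually_mem (hD.mem_nhds (by simpa using hz)))
    exact (hnear.and self_mem_nhdsWithin).exists
  have hnonneg := inner_sub_nonneg_of_ball_subset hD_convex hq hball hzt
  have hpos : 0 < inner ℝ (p - q) (p - q) := real_inner_self_pos.2 (sub_ne_zero.2 hpq)
  rw [sub_right_comm, inner_sub_right, real_inner_smul_right] at hnonneg
  exact (mul_pos ht hpos).trans_le (sub_nonneg.1 hnonneg)

theorem exists_tangent_disk {D : Set ℂ} (hD : IsOpen D) (hD_convex : Convex ℝ D)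
    (hD_nonempty : D.Nonempty) (hD_univ : D ≠ univ) :
    ∃ q v : ℂ, v ≠ 0 ∧ (∀ w ∈ ball (1 : ℂ) 1, q + v * w ∈ D) ∧ ∀ w, q + v * w ∈ D → 0 < w.re := by
  obtain ⟨p, hp⟩ := hD_nonempty
  obtain ⟨q, hq, hpq⟩ :=
    hD.isClosed_compl.exists_infDist_eq_dist (nonempty_compl.2 hD_univ) p
  have hball : ball p (dist p q) ⊆ D := hpq ▸ ball_infDist_compl_subset
  have hne : p ≠ q := fun h ↦ hq (h ▸ hp)
  refine ⟨q, p - q, sub_ne_zero.2 hne, fun w hw ↦ hball ?_, fun w hw ↦ ?_⟩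
  · rw [mem_ball_iff_norm] at hw ⊢
    rw [dist_eq_norm, show q + (p - q) * w - p = (p - q) * (w - 1) by ring, norm_mul]
    exact mul_lt_of_lt_one_right (norm_pos_iff.2 (sub_ne_zero.2 hne)) hw
  · have hinner := inner_sub_pos_of_ball_subset hD hD_convex hq hball hne hw
    have hre : inner ℝ (p - q) (q + (p - q) * w - q) = Complex.normSq (p - q) * w.re := by
      rw [add_sub_cancel_left, Complex.inner, mul_right_comm, Complex.mul_conj,
        Complex.re_ofReal_mul]
    rw [hre] at hinner
    exact pos_of_mul_pos_right hinner (Complex.normSq_nonneg _)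

/-- The open half-plane `Re z > 0`, the model for blow-ups of planar convex domains. -/
def rightHalfPlane : Set ℂ := {z | 0 < z.re}

theorem isOpen_rightHalfPlane : IsOpen rightHalfPlane :=
  isOpen_lt continuous_const Complex.continuous_re

theorem convergesLocally_zoom {D : Set ℂ} {q v : ℂ}
    (hdisk : ∀ w ∈ ball (1 : ℂ) 1, q + v * w ∈ D) (hline : ∀ w, q + v * w ∈ D → 0 < w.re) :
    ConvergesLocally (fun s : ℝ ↦ {w | q + s • (v * w) ∈ D}) (𝓝[>] 0) rightHalfPlane := by
  have hpos (p : ℂ) : ∀ᶠ k in 𝓝[>] (0 : ℝ) ×ˢ 𝓝 p, 0 < k.1 :=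
    tendsto_fst.eventually self_mem_nhdsWithin
  refine .of_isOpen isOpen_rightHalfPlane (fun p hp ↦ ?_) fun p hp ↦ ?_
  · have hdisk_eventually : ∀ᶠ k in 𝓝 ((0 : ℝ), p), k.1 * Complex.normSq k.2 < 2 * k.2.re := by
      refine ContinuousAt.eventually_lt (by fun_prop) (by fun_prop) ?_
      simpa [rightHalfPlane] using hp
    filter_upwards [hpos p, nhdsGT_prod_nhds_le (0 : ℝ) p hdisk_eventually] with ⟨s, w⟩ hs hsw
    change q + s • (v * w) ∈ D
    rw [← mul_smul_comm, Complex.real_smul]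
    refine hdisk _ ?_
    rw [mem_ball_iff_norm, ← sq_lt_one_iff₀ (norm_nonneg _)]
    calc ‖(s * w - 1 : ℂ)‖ ^ 2 = s * (s * Complex.normSq w - 2 * w.re) + 1 := by
          rw [← Complex.normSq_eq_norm_sq, Complex.normSq_sub, map_one, map_one, mul_one,
            Complex.re_ofReal_mul, Complex.normSq_mul, Complex.normSq_ofReal]
          ring
      _ < 1 := by linarith [mul_neg_of_pos_of_neg hs (sub_neg.2 hsw)]
  · filter_upwards [hpos p,
      tendsto_snd.eventually (isClosed_closure.isOpen_compl.mem_nhds hp)]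
      with ⟨s, w⟩ hs hw (hmem : q + s • (v * w) ∈ D)
    rw [← mul_smul_comm, Complex.real_smul] at hmem
    have hre := hline _ hmem
    rw [Complex.re_ofReal_mul] at hre
    exact hw (subset_closure (pos_of_mul_pos_right hre hs.le))

end BlowUpAtTangentDisk

section IteratedBlowUp

theorem exists_continuousAffineEquiv_add_mul {𝔸 : Type*} [NormedRing 𝔸] [NormedAlgebra ℂ 𝔸]
    (a : 𝔸) {u : 𝔸} (hu : IsUnit u) : ∃ A : 𝔸 ≃ᴬ[ℂ] 𝔸, ∀ z, A z = a + u * z := by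
  obtain ⟨u, rfl⟩ := hu
  exact ⟨(ContinuousLinearEquiv.smulLeft u).toContinuousAffineEquiv.trans
    (ContinuousAffineEquiv.constVAdd ℂ 𝔸 a), fun z ↦ rfl⟩

theorem neBot_curry {α β : Type*} (l : Filter α) (m : Filter β) [NeBot l] [NeBot m] :
    NeBot (l.curry m) := by
  simp [← frequently_true_iff_neBot, frequently_curry_iff]

theorem isUnit_one_mk {t : ℝ} (ht : t ≠ 0) : IsUnit ((1 : ℂ), (t : ℂ)) := by
  simpa [Prod.isUnit_iff] using ht

/-- In this iterated limit the dilation parameter `k.2` tends to `0` before the zoom parameter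
`k.1`. -/
theorem exists_convergesLocally_rightHalfPlane_prod {U : Set (ℂ × ℂ)} (hU : IsConvexDomain U)
    (hface : (horizontalFace U).Nonempty) (hface_univ : horizontalFace U ≠ univ)
    (hcone_univ : verticalCone U ≠ univ) :
    ∃ q v : ℂ × ℂ, IsUnit v ∧
      ConvergesLocally (fun k : ℝ × ℝ ↦ {z | (1, (k.2 : ℂ)) * (q + k.1 • (v * z)) ∈ U})
        ((𝓝[>] 0).curry (𝓝[>] 0)) (rightHalfPlane ×ˢ rightHalfPlane) := by
  obtain ⟨hU_open, hU_convex, hU_nonempty⟩ := hU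
  have hcone : (verticalCone U).Nonempty :=
    (hU_nonempty.image Prod.snd).mono ConvexCone.subset_hull
  obtain ⟨q₁, v₁, hv₁, hdisk₁, hline₁⟩ := exists_tangent_disk isOpen_horizontalFace
    (convex_horizontalFace hU_convex) hface hface_univ
  obtain ⟨q₂, v₂, hv₂, hdisk₂, hline₂⟩ := exists_tangent_disk
    (isOpen_verticalCone hU_open hU_convex) (ConvexCone.convex _) hcone hcone_univ
  have hv : IsUnit (v₁, v₂) := Prod.isUnit_iff.2 ⟨hv₁.isUnit, hv₂.isUnit⟩
  refine ⟨(q₁, q₂), (v₁, v₂), hv, .curry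
    (S := fun s t : ℝ ↦ {z : ℂ × ℂ | (1, (t : ℂ)) * ((q₁, q₂) + s • ((v₁, v₂) * z)) ∈ U}) ?_
    ((convergesLocally_zoom hdisk₁ hline₁).prod (convergesLocally_zoom hdisk₂ hline₂)
      isOpen_rightHalfPlane isOpen_rightHalfPlane)⟩
  filter_upwards [self_mem_nhdsWithin] with s (hs : 0 < s)
  obtain ⟨A, hA⟩ := exists_continuousAffineEquiv_add_mul (q₁, q₂)
    (hv.smul (Units.mk0 s hs.ne'))
  have hA_apply (z : ℂ × ℂ) :
      A.toHomeomorph z = (q₁ + s • (v₁ * z.1), q₂ + s • (v₂ * z.2)) :=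
    (hA z).trans (by simp only [Units.smul_mk0, smul_mul_assoc]; rfl)
  have hdilation (t : ℝ) : A.toHomeomorph ⁻¹' {z | (z.1, t • z.2) ∈ U} =
      {z | (1, (t : ℂ)) * ((q₁, q₂) + s • ((v₁, v₂) * z)) ∈ U} := by
    ext z
    simp [hA_apply, Prod.mul_def]
  have hlimit : A.toHomeomorph ⁻¹' horizontalFace U ×ˢ verticalCone U =
      {w | q₁ + s • (v₁ * w) ∈ horizontalFace U} ×ˢ {w | q₂ + s • (v₂ * w) ∈ verticalCone U} := by
    ext z
    simp [hA_apply]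
  simpa only [hdilation, hlimit] using
    (convergesLocally_dilation_snd hU_open hU_convex hface).preimage A.toHomeomorph

theorem exists_seq_rescaling {U : Set (ℂ × ℂ)} (hU : IsConvexDomain U)
    (hface : (horizontalFace U).Nonempty) (hface_univ : horizontalFace U ≠ univ)
    (hcone_univ : verticalCone U ≠ univ) :
    ∃ (T : ℕ → (ℂ × ℂ) ≃ᴬ[ℂ] ℂ × ℂ) (x : ℂ),
      ConvergesLocally (fun n ↦ T n ⁻¹' U) atTop (rightHalfPlane ×ˢ rightHalfPlane) ∧
      (∀ n, T n 1 ∈ U) ∧ Tendsto (fun n ↦ T n 1) atTop (𝓝 (x, 0)) := by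
  obtain ⟨q, v, hv, hconv⟩ :=
    exists_convergesLocally_rightHalfPlane_prod hU hface hface_univ hcone_univ
  set l : Filter (ℝ × ℝ) := (𝓝[>] 0).curry (𝓝[>] 0)
  have := neBot_curry (𝓝[>] (0 : ℝ)) (𝓝[>] (0 : ℝ))
  have hpos : ∀ᶠ k in l, 0 < k.1 ∧ 0 < k.2 :=
    curry_le_prod (prod_mem_prod self_mem_nhdsWithin self_mem_nhdsWithin)
  have hmem : ∀ᶠ k in l, (1, (k.2 : ℂ)) * (q + k.1 • (v * 1)) ∈ U := by
    have hone : (1 : ℂ × ℂ) ∈ rightHalfPlane ×ˢ rightHalfPlane := by simp [rightHalfPlane]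
    exact (tendsto_id.prodMk tendsto_const_nhds).eventually
      (hconv.eventually_mem (isOpen_rightHalfPlane.prod isOpen_rightHalfPlane) hone)
  have hlim : Tendsto (fun k : ℝ × ℝ ↦ (1, (k.2 : ℂ)) * (q + k.1 • (v * 1))) l
      (𝓝 (q.1, 0)) := by
    have hle : l ≤ 𝓝 (0, 0) := by
      rw [nhds_prod_eq]
      exact curry_le_prod.trans (prod_mono nhdsWithin_le_nhds nhdsWithin_le_nhds)
    refine Tendsto.mono_left ?_ hle
    refine (Continuous.tendsto' ?_ _ _ ?_)
    · fun_prop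
    · ext <;> simp
  obtain ⟨φ, hφ, hφ_conv, hφ_lim⟩ := hconv.exists_seq hlim (hpos.and hmem)
  have hT (n : ℕ) : ∃ A : (ℂ × ℂ) ≃ᴬ[ℂ] ℂ × ℂ,
      ∀ z, A z = (1, ((φ n).2 : ℂ)) * (q + (φ n).1 • (v * z)) := by
    obtain ⟨⟨hs, ht⟩, -⟩ := hφ n
    obtain ⟨A, hA⟩ := exists_continuousAffineEquiv_add_mul
      ((1, ((φ n).2 : ℂ)) * q) ((isUnit_one_mk ht.ne').mul (hv.smul (Units.mk0 _ hs.ne')))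
    exact ⟨A, fun z ↦ by
      simp only [hA, Units.smul_mk0, smul_mul_assoc, mul_add, mul_smul_comm, mul_assoc]⟩
  choose T hT using hT
  refine ⟨T, q.1, ?_, fun n ↦ ?_, ?_⟩
  · simpa only [preimage, hT, Function.comp_def] using hφ_conv
  · simpa only [hT] using (hφ n).2
  · simpa only [hT, Function.comp_def] using hφ_lim

end IteratedBlowUp

section AdaptedCoordinates

theorem eq_zero_of_re_mul_nonneg {κ : ℂ} (h : ∀ x ∈ ball (0 : ℂ) 1, 0 ≤ (κ * x).re) : κ = 0 := by
  by_contra hκ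
  have hmem : -(2⁻¹ * ((‖κ‖ : ℂ) / κ)) ∈ ball (0 : ℂ) 1 := by
    simp only [mem_ball_zero_iff, norm_neg, norm_mul, norm_inv, norm_div, Complex.norm_real,
      norm_norm, Complex.norm_ofNat, div_self (norm_ne_zero_iff.2 hκ)]
    norm_num
  have hval : κ * -(2⁻¹ * ((‖κ‖ : ℂ) / κ)) = ((-(‖κ‖ / 2) : ℝ) : ℂ) := by
    push_cast
    field_simp
  have hneg := h _ hmem
  rw [hval, Complex.ofReal_re] at hneg
  linarith [norm_pos_iff.2 hκ]

theorem affineMap_apply_eq_smul_add {K E : Type*} [Field K] [AddCommGroup E] [Module K E]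
    (ℓ : K →ᵃ[K] E) (x : K) : ℓ x = x • ℓ.linear 1 + ℓ 0 := by
  rw [← map_smul, smul_eq_mul, mul_one, ← vadd_eq_add, ← ℓ.map_vadd, vadd_eq_add, add_zero]

theorem exists_supporting_functional_of_affine_disk {E : Type*} [NormedAddCommGroup E]
    [NormedSpace ℂ E] {Ω : Set E} (hΩ_open : IsOpen Ω) (hΩ_convex : Convex ℝ Ω) {ℓ : ℂ →ᵃ[ℂ] E}
    (hℓ : ℓ '' ball (0 : ℂ) 1 ⊆ frontier Ω) :
    ∃ f : StrongDual ℂ E, f (ℓ.linear 1) = 0 ∧ ∀ z ∈ Ω, (f (ℓ 0)).re < (f z).re := by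
  have hℓ_mem (x : ℂ) (hx : x ∈ ball 0 1) : ℓ x ∈ frontier Ω := hℓ (mem_image_of_mem ℓ hx)
  have hzero : ℓ 0 ∉ Ω := by
    have := hℓ_mem 0 (by simp)
    rw [hΩ_open.frontier_eq] at this
    exact this.2
  obtain ⟨f, hf⟩ := RCLike.geometric_hahn_banach_point_open (𝕜 := ℂ) hΩ_convex hΩ_open hzero
  have hf_closure : ∀ z ∈ closure Ω, (f (ℓ 0)).re ≤ (f z).re :=
    closure_minimal (t := {z | (f (ℓ 0)).re ≤ (f z).re}) (fun z hz ↦ (hf z hz).le)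
      (isClosed_le (by fun_prop) (by fun_prop))
  refine ⟨f, eq_zero_of_re_mul_nonneg fun x hx ↦ ?_, hf⟩
  have hle := hf_closure _ (hℓ_mem x hx).1
  rw [affineMap_apply_eq_smul_add ℓ x, map_add, map_smul, Complex.add_re, smul_eq_mul,
    mul_comm] at hle
  linarith

theorem exists_linearEquiv_prod_of_apply_eq_zero {K E : Type*} [Field K] [AddCommGroup E]
    [Module K E] (hE : Module.finrank K E = 2) {f : Module.Dual K E} (hf : f ≠ 0) {e : E}
    (he : e ≠ 0) (hfe : f e = 0) :
    ∃ L : (K × K) ≃ₗ[K] E, (∀ x, L (x, 0) = x • e) ∧ ∀ z, f (L z) = z.2 := by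
  obtain ⟨g, hg⟩ := LinearMap.surjective hf 1
  let B : K × K →ₗ[K] E := .coprod (.toSpanSingleton K E e) (.toSpanSingleton K E g)
  have hB (z : K × K) : B z = z.1 • e + z.2 • g := by simp [B]
  have hfB (z : K × K) : f (B z) = z.2 := by simp [hB, hfe, hg]
  have hB_inj : Function.Injective B := by
    refine (injective_iff_map_eq_zero B).2 fun z hz ↦ ?_
    have hz₂ : z.2 = 0 := by rw [← hfB, hz, map_zero]
    have hz₁ : z.1 = 0 := by simpa [hB, hz₂, he] using hz
    exact Prod.ext hz₁ hz₂
  have : FiniteDimensional K E := .of_finrank_pos (by omega)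
  exact ⟨LinearEquiv.ofInjectiveOfFinrankEq B hB_inj (by simp [hE]),
    fun x ↦ (hB (x, 0)).trans (by simp), hfB⟩

theorem exists_adapted_coordinates {E : Type*} [NormedAddCommGroup E] [NormedSpace ℂ E]
    (hE : Module.finrank ℂ E = 2) {Ω : Set E} (hΩ : IsConvexDomain Ω) {ℓ : ℂ →ᵃ[ℂ] E}
    (hℓ : ℓ.linear ≠ 0) (hdisk : ℓ '' ball (0 : ℂ) 1 ⊆ frontier Ω) :
    ∃ Ψ : (ℂ × ℂ) ≃ᴬ[ℂ] E,
      (horizontalFace (Ψ ⁻¹' Ω)).Nonempty ∧ ∀ z ∈ Ψ ⁻¹' Ω, 0 < z.2.re := by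
  obtain ⟨hΩ_open, hΩ_convex, z₀, hz₀⟩ := hΩ
  obtain ⟨f, hfe, hf⟩ := exists_supporting_functional_of_affine_disk hΩ_open hΩ_convex hdisk
  have hf_ne : (f : Module.Dual ℂ E) ≠ 0 := fun h ↦ by
    have hval (z : E) : f z = 0 := LinearMap.congr_fun h z
    simpa [hval] using hf z₀ hz₀
  have he : ℓ.linear 1 ≠ 0 := fun h ↦ hℓ (LinearMap.ext_ring h)
  obtain ⟨L, hL, hfL⟩ := exists_linearEquiv_prod_of_apply_eq_zero hE hf_ne he hfe
  let Ψ : (ℂ × ℂ) ≃ᴬ[ℂ] E := L.toContinuousLinearEquiv.toContinuousAffineEquiv.trans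
    (ContinuousAffineEquiv.constVAdd ℂ E (ℓ 0))
  have hΨ (z : ℂ × ℂ) : Ψ z = ℓ 0 + L z := rfl
  refine ⟨Ψ, ⟨0, ?_⟩, fun z hz ↦ ?_⟩
  · refine interior_mono (fun x hx ↦ ?_) (isOpen_ball.interior_eq.ge (mem_ball_self one_pos))
    have hx_closure : Ψ (x, 0) ∈ closure Ω := by
      rw [hΨ, hL, add_comm, ← affineMap_apply_eq_smul_add]
      exact frontier_subset_closure (hdisk (mem_image_of_mem ℓ hx))
    exact (Ψ.toHomeomorph.preimage_closure Ω).le hx_closure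
  · have hlt := hf _ hz
    rw [hΨ, map_add, Complex.add_re] at hlt
    have : f (L z) = z.2 := hfL z
    simpa [this] using hlt

theorem InX.horizontalFace_ne_univ {U : Set (ℂ × ℂ)} (hU : InX U) : horizontalFace U ≠ univ := by
  intro h
  refine hU.noComplexLine_closure 0 (1, 0) (by simp) fun c ↦ ?_
  have hc : c ∈ horizontalFace U := h ▸ mem_univ c
  simpa using interior_subset hc

theorem verticalCone_ne_univ {U : Set (ℂ × ℂ)} (hU : Convex ℝ U) (hU_re : ∀ z ∈ U, 0 < z.2.re) :
    verticalCone U ≠ univ := by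
  intro h
  obtain ⟨r, hr, _, ⟨z, hz, rfl⟩, hrz⟩ := (mem_verticalCone_iff hU).1 (h ▸ mem_univ (0 : ℂ))
  have hz_zero : z.2 = 0 := (smul_eq_zero.1 hrz).resolve_left hr.ne'
  simpa [hz_zero] using hU_re z hz

end AdaptedCoordinates

section Biholomorphisms

variable {E F G H : Type*} [NormedAddCommGroup E] [NormedSpace ℂ E] [NormedAddCommGroup F]
  [NormedSpace ℂ F] [NormedAddCommGroup G] [NormedSpace ℂ G] [NormedAddCommGroup H]
  [NormedSpace ℂ H]

theorem Biholomorphic.trans {S : Set E} {T : Set F} {R : Set G} (hST : Biholomorphic S T)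
    (hTR : Biholomorphic T R) : Biholomorphic S R := by
  obtain ⟨f, g, hf, hg, hfm, hgm, hfg⟩ := hST
  obtain ⟨f', g', hf', hg', hfm', hgm', hfg'⟩ := hTR
  exact ⟨f' ∘ f, g ∘ g', hf'.comp hf hfm, hg.comp hg' hgm', hfm'.comp hfm, hgm.comp hgm',
    hfg.comp hfg' hfm hgm'⟩

theorem Biholomorphic.prod {S : Set E} {T : Set F} {S' : Set G} {T' : Set H}
    (h : Biholomorphic S T) (h' : Biholomorphic S' T') : Biholomorphic (S ×ˢ S') (T ×ˢ T') := by
  obtain ⟨f, g, hf, hg, hfm, hgm, hfg, hgf⟩ := h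
  obtain ⟨f', g', hf', hg', hfm', hgm', hfg', hgf'⟩ := h'
  exact ⟨Prod.map f f', Prod.map g g',
    (hf.comp differentiableOn_fst fun _ hz ↦ hz.1).prodMk
      (hf'.comp differentiableOn_snd fun _ hz ↦ hz.2),
    (hg.comp differentiableOn_fst fun _ hz ↦ hz.1).prodMk
      (hg'.comp differentiableOn_snd fun _ hz ↦ hz.2), hfm.prodMap hfm',
    hgm.prodMap hgm', hfg.prodMap hfg', hgf.prodMap hgf'⟩

theorem biholomorphic_preimage (A : E ≃ᴬ[ℂ] F) (S : Set F) : Biholomorphic (A ⁻¹' S) S :=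
  ⟨A, A.symm, A.toContinuousAffineMap.differentiableOn,
    A.symm.toContinuousAffineMap.differentiableOn,
    fun _ hz ↦ hz, fun z hz ↦ by simpa using hz,
    A.left_inv.leftInvOn _, A.right_inv.rightInvOn _⟩

theorem add_one_ne_zero_of_re_pos {w : ℂ} (hw : 0 < w.re) : w + 1 ≠ 0 := fun h ↦ by
  have hre : w.re = -1 := by simp [eq_neg_of_add_eq_zero_left h]
  linarith

theorem one_sub_ne_zero_of_norm_lt_one {u : ℂ} (hu : ‖u‖ < 1) : 1 - u ≠ 0 :=
  sub_ne_zero.2 fun h ↦ by simp [← h] at hu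

theorem norm_sub_one_div_add_one_lt_one {w : ℂ} (hw : 0 < w.re) : ‖(w - 1) / (w + 1)‖ < 1 := by
  rw [norm_div, div_lt_one (norm_pos_iff.2 (add_one_ne_zero_of_re_pos hw)),
    ← sq_lt_sq₀ (norm_nonneg _) (norm_nonneg _), ← Complex.normSq_eq_norm_sq,
    ← Complex.normSq_eq_norm_sq, Complex.normSq_sub, Complex.normSq_add]
  simp only [map_one, mul_one]
  linarith

theorem re_one_add_div_one_sub_pos {u : ℂ} (hu : ‖u‖ < 1) : 0 < ((1 + u) / (1 - u)).re := by
  have hsq : u.re * u.re + u.im * u.im < 1 := by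
    rw [← Complex.normSq_apply, Complex.normSq_eq_norm_sq]
    exact pow_lt_one₀ (norm_nonneg u) hu two_ne_zero
  rw [Complex.div_re, ← add_div]
  refine div_pos ?_ (Complex.normSq_pos.2 (one_sub_ne_zero_of_norm_lt_one hu))
  simp only [Complex.add_re, Complex.sub_re, Complex.add_im, Complex.sub_im, Complex.one_re,
    Complex.one_im]
  linarith

theorem biholomorphic_rightHalfPlane_ball : Biholomorphic rightHalfPlane (ball (0 : ℂ) 1) := by
  have hadd {w : ℂ} (hw : w ∈ rightHalfPlane) : w + 1 ≠ 0 := add_one_ne_zero_of_re_pos hw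
  have hsub {u : ℂ} (hu : u ∈ ball (0 : ℂ) 1) : 1 - u ≠ 0 :=
    one_sub_ne_zero_of_norm_lt_one (mem_ball_zero_iff.1 hu)
  refine ⟨fun w ↦ (w - 1) / (w + 1), fun u ↦ (1 + u) / (1 - u),
    .div (by fun_prop) (by fun_prop) fun w ↦ hadd, .div (by fun_prop) (by fun_prop) fun u ↦ hsub,
    fun w hw ↦ mem_ball_zero_iff.2 (norm_sub_one_div_add_one_lt_one hw),
    fun u hu ↦ re_one_add_div_one_sub_pos (mem_ball_zero_iff.1 hu), fun w hw ↦ ?_, fun u hu ↦ ?_⟩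
  · have hw_add := hadd hw
    field_simp
    ring
  · have hu_sub := hsub hu
    field_simp
    ring

theorem biholomorphic_rightHalfPlane_prod_unitBidisk :
    Biholomorphic (rightHalfPlane ×ˢ rightHalfPlane) unitBidisk :=
  biholomorphic_rightHalfPlane_ball.prod biholomorphic_rightHalfPlane_ball

end Biholomorphisms

theorem inX_rightHalfPlane : InX rightHalfPlane :=
  ⟨⟨isOpen_rightHalfPlane, convex_halfSpace_re_gt 0, 1, by simp [rightHalfPlane]⟩,
    .of_ne_univ fun h ↦ by simpa [rightHalfPlane] using h.ge (mem_univ 0)⟩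

theorem statement0_general {E : Type*} [NormedAddCommGroup E] [NormedSpace ℂ E]
    (hE : Module.finrank ℂ E = 2) {Ω : Set E} (hΩ : InX Ω)
    (hdisk : ∃ ℓ : ℂ →ᵃ[ℂ] E, ℓ.linear ≠ 0 ∧ ℓ '' ball (0 : ℂ) 1 ⊆ frontier Ω) :
    ∃ Ωlim : Set E, IsAffineLimit Ω Ωlim ∧ Biholomorphic Ωlim unitBidisk := by
  have : FiniteDimensional ℂ E := .of_finrank_pos (by omega)
  have : ProperSpace E := FiniteDimensional.proper ℂ E
  obtain ⟨ℓ, hℓ, hℓ_frontier⟩ := hdisk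
  obtain ⟨Ψ, hface, hU_re⟩ := exists_adapted_coordinates hE hΩ.1 hℓ hℓ_frontier
  have hU : InX (Ψ ⁻¹' Ω) := hΩ.preimage Ψ
  obtain ⟨T, x, hT, hT_mem, hT_lim⟩ := exists_seq_rescaling hU.1 hface hU.horizontalFace_ne_univ
    (verticalCone_ne_univ hU.1.2.1 hU_re)
  refine ⟨Ψ.symm ⁻¹' (rightHalfPlane ×ˢ rightHalfPlane), ?_,
    (biholomorphic_preimage Ψ.symm _).trans biholomorphic_rightHalfPlane_prod_unitBidisk⟩
  have hone : Ψ 1 ∈ Ψ.symm ⁻¹' (rightHalfPlane ×ˢ rightHalfPlane) := by simp [rightHalfPlane]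
  refine isAffineLimit_of_convergesLocally (T := fun n ↦ Ψ.symm.trans ((T n).trans Ψ))
    (x := Ψ (x, 0)) (hT.preimage Ψ.symm.toHomeomorph)
    ((inX_rightHalfPlane.prod inX_rightHalfPlane).preimage Ψ.symm) hone (fun n ↦ ?_) ?_ ?_
  · simpa using hT_mem n
  · simpa [Function.comp_def] using (Ψ.continuous.tendsto (x, 0)).comp hT_lim
  · exact fun hx ↦ by simpa using hU_re (x, 0) hx

/-- If `Ω ⊆ ℂ²` is a convex domain containing no complex affine line and
`∂Ω` contains a non-trivial affine disk, then some affine limit of `Ω` is biholomorphic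
to `𝔻 × 𝔻`. -/
theorem statement0 (Ω : Set (EuclideanSpace ℂ (Fin 2))) (hΩ : InX Ω)
    (hdisk : ∃ ℓ : ℂ →ᵃ[ℂ] EuclideanSpace ℂ (Fin 2),
      ℓ.linear ≠ 0 ∧ ℓ '' (Metric.ball (0:ℂ) 1) ⊆ frontier Ω) :
    ∃ Ωlim : Set (EuclideanSpace ℂ (Fin 2)),
      IsAffineLimit Ω Ωlim ∧ Biholomorphic Ωlim unitBidisk :=
  statement0_general finrank_euclideanSpace_fin hΩ hdisk
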